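/- Let M₁ and M₂ be finite MDPs with the same discount factor γ ∈ [0,1), d^{1-2} their GBSM, π : S₁ → A₁ a deterministic policy on M₁, f : S₂ → S₁ a state mapping and g : A₁ → A₂ an action mapping. Let V₁* and V₂* satisfy the Bellman optimality equations in M₁ and M₂, let V₁^π satisfy V₁^π(s) = R₁(s,π(s)) + γ·Σ_{s̃} P₁(s̃|s,π(s))·V₁^π(s̃), and let V₂^π satisfy V₂^π(s') = R₂(s',g(π(f(s')))) + γ·Σ_{s̃} P₂(s̃|s',g(π(f(s'))))·V₂^π(s̃). Then max_{s'∈S₂} |V₂*(s') − V₂^π(s')| ≤ ( max_{s'∈S₂} d^{1-2}(f(s'),s') + max_{s'∈S₂, a∈A₁} δ(d^{1-2})((f(s'),a),(s',g(a))) + (1+γ)·max_{s∈S₁} |V₁*(s) − V₁^π(s)| ) / (1−γ). -/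

import Mathlib

open scoped BigOperators

noncomputable section

/-- The (finite, linear-programming) 1-Wasserstein distance between probability
vectors `P` on `S₁` and `Q` on `S₂` with cost function `d`. -/
def W1 {S₁ S₂ : Type*} [Fintype S₁] [Fintype S₂]
    (P : S₁ → ℝ) (Q : S₂ → ℝ) (d : S₁ → S₂ → ℝ) : ℝ :=
  sInf { c : ℝ | ∃ lam : S₁ → S₂ → ℝ,
    (∀ i j, 0 ≤ lam i j) ∧ (∀ i, ∑ j, lam i j = P i) ∧
    (∀ j, ∑ i, lam i j = Q j) ∧ c = ∑ i, ∑ j, lam i j * d i j }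

/-- A finite Markov decision process (without its discount factor). -/
structure FinMDP (S A : Type*) [Fintype S] [Fintype A] where
  P : S → A → S → ℝ
  R : S → A → ℝ
  P_nonneg : ∀ s a s', 0 ≤ P s a s'
  P_sum : ∀ s a, ∑ s', P s a s' = 1

variable {S₁ A₁ S₂ A₂ : Type*} [Fintype S₁] [Fintype A₁] [Fintype S₂] [Fintype A₂]

/-- `δ(d)((s,a),(s',a')) = |R₁(s,a) − R₂(s',a')| + γ·W₁(P₁(·|s,a), P₂(·|s',a'); d)` -/
def gbsmDelta (M₁ : FinMDP S₁ A₁) (M₂ : FinMDP S₂ A₂) (γ : ℝ)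
    (d : S₁ → S₂ → ℝ) (s : S₁) (a : A₁) (s' : S₂) (a' : A₂) : ℝ :=
  |M₁.R s a - M₂.R s' a'| + γ * W1 (M₁.P s a) (M₂.P s' a') d

/-- The GBSM operator `F(d)(s,s') = H(X_s, X_{s'}; δ(d))` where `H` is the Hausdorff
metric between the finite sets `X_s = {(s,a)}`, `X_{s'} = {(s',a')}`. -/
def gbsmF (M₁ : FinMDP S₁ A₁) (M₂ : FinMDP S₂ A₂) (γ : ℝ)
    (d : S₁ → S₂ → ℝ) : S₁ → S₂ → ℝ :=
  fun s s' =>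
    max (⨆ a : A₁, ⨅ a' : A₂, gbsmDelta M₁ M₂ γ d s a s' a')
        (⨅ a : A₁, ⨆ a' : A₂, gbsmDelta M₁ M₂ γ d s a s' a')

/-- The GBSM: pointwise supremum of the iterates of `gbsmF` from the zero function. -/
def gbsm (M₁ : FinMDP S₁ A₁) (M₂ : FinMDP S₂ A₂) (γ : ℝ) : S₁ → S₂ → ℝ :=
  fun s s' => ⨆ n : ℕ, (gbsmF M₁ M₂ γ)^[n] (fun _ _ => 0) s s'


variable [Nonempty S₁] [Nonempty A₁] [Nonempty S₂] [Nonempty A₂]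

/-!
Let `X` be the largest regret in `M₂`, `ρ` the largest regret of `π` in `M₁`, and `D` and `E` the
suprema of the GBSM and of `δ` in the bound. By Kantorovich duality, functions with
`|U s - V s'| ≤ d s s'` have one-step lookaheads that differ by at most `δ(d)`, and taking optima
turns `δ(d)` into its Hausdorff lift. Iterating this contraction on the optimal values shows that
the GBSM dominates `|V₁* - V₂*|`. Now go from `V₂*(s')` to `V₁*(f s')`, to `V₁^π(f s')`, to
`V₂^π(s')`. The steps cost at most `D`, `ρ` and `γ ρ + E + γ X`, the last one because it can be
routed through the lookaheads of `V₁*` and `V₂*`. Hence `X ≤ D + E + (1 + γ) ρ + γ X`, which is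
solved for `X`.
-/

section HausdorffCost

variable {α β : Type*}

/-- The Hausdorff lift `H(X, Y; c)` of a cost between the points of `α` and those of `β`, with the
minimum and the maximum over a finite set encoded as `⨅` and `⨆`. -/
def hausdorffCost (c : α → β → ℝ) : ℝ :=
  max (⨆ a, ⨅ b, c a b) (⨅ a, ⨆ b, c a b)

theorem hausdorffCost_le [Finite α] [Finite β] [Nonempty α] [Nonempty β] {c : α → β → ℝ} {K : ℝ}
    (h : ∀ a b, c a b ≤ K) : hausdorffCost c ≤ K := by
  obtain ⟨a₀⟩ := ‹Nonempty α›
  obtain ⟨b₀⟩ := ‹Nonempty β›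
  exact max_le
    (ciSup_le fun a => ciInf_le_of_le (Finite.bddBelow_range _) b₀ (h a b₀))
    (ciInf_le_of_le (Finite.bddBelow_range _) a₀ (ciSup_le fun b => h a₀ b))

theorem abs_ciSup_sub_ciSup_le_hausdorffCost_add [Finite α] [Finite β] [Nonempty α] [Nonempty β]
    {x : α → ℝ} {y : β → ℝ} {c : α → β → ℝ} {ε : ℝ} (h : ∀ a b, |x a - y b| ≤ c a b + ε) :
    |(⨆ a, x a) - ⨆ b, y b| ≤ hausdorffCost c + ε := by
  have hx : ⨆ a, x a ≤ (⨆ a, ⨅ b, c a b) + ε + ⨆ b, y b := by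
    refine ciSup_le fun a => ?_
    have hrow : x a - ε - ⨆ b, y b ≤ ⨅ b, c a b := le_ciInf fun b => by
      linarith [(abs_le.1 (h a b)).2, le_ciSup (Finite.bddAbove_range y) b]
    linarith [le_ciSup (Finite.bddAbove_range fun a => ⨅ b, c a b) a]
  have hy : (⨆ b, y b) - (⨆ a, x a) - ε ≤ ⨅ a, ⨆ b, c a b := by
    refine le_ciInf fun a => ?_
    have hcol : ⨆ b, y b ≤ (⨆ b, c a b) + ε + x a := ciSup_le fun b => by
      linarith [(abs_le.1 (h a b)).1, le_ciSup (Finite.bddAbove_range (c a)) b]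
    linarith [le_ciSup (Finite.bddAbove_range x) a]
  have hleft : ⨆ a, ⨅ b, c a b ≤ hausdorffCost c := le_max_left _ _
  have hright : ⨅ a, ⨆ b, c a b ≤ hausdorffCost c := le_max_right _ _
  rw [abs_le]
  constructor <;> linarith

end HausdorffCost

section Wasserstein

variable {S T : Type*} [Fintype S] [Fintype T] {P : S → ℝ} {Q : T → ℝ}

/-- `lam` is a coupling of `P` and `Q`: a nonnegative matrix with these marginals, i.e. a feasible
point of the linear program defining `W1 P Q`. -/
structure IsCoupling (P : S → ℝ) (Q : T → ℝ) (lam : S → T → ℝ) : Prop where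
  nonneg : ∀ i j, 0 ≤ lam i j
  sum_right : ∀ i, ∑ j, lam i j = P i
  sum_left : ∀ j, ∑ i, lam i j = Q j

namespace IsCoupling

theorem mul_of_mem_stdSimplex (hP : P ∈ stdSimplex ℝ S) (hQ : Q ∈ stdSimplex ℝ T) :
    IsCoupling P Q fun i j => P i * Q j where
  nonneg i j := mul_nonneg (hP.1 i) (hQ.1 j)
  sum_right i := by rw [← Finset.mul_sum, hQ.2, mul_one]
  sum_left j := by rw [← Finset.sum_mul, hP.2, one_mul]

variable {lam d : S → T → ℝ}

theorem sum_mul_sub_sum_mul_eq (hlam : IsCoupling P Q lam) (U : S → ℝ) (V : T → ℝ) :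
    ∑ i, P i * U i - ∑ j, Q j * V j = ∑ i, ∑ j, lam i j * (U i - V j) := by
  simp only [mul_sub, Finset.sum_sub_distrib, ← hlam.sum_right, ← hlam.sum_left, Finset.sum_mul]
  rw [Finset.sum_comm (f := fun j i => lam i j * V j)]

theorem sum_mul_sub_sum_mul_le (hlam : IsCoupling P Q lam) {U : S → ℝ} {V : T → ℝ}
    (h : ∀ i j, U i - V j ≤ d i j) :
    ∑ i, P i * U i - ∑ j, Q j * V j ≤ ∑ i, ∑ j, lam i j * d i j := by
  rw [hlam.sum_mul_sub_sum_mul_eq]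
  exact Finset.sum_le_sum fun i _ => Finset.sum_le_sum fun j _ =>
    mul_le_mul_of_nonneg_left (h i j) (hlam.nonneg i j)

theorem W1_le (hlam : IsCoupling P Q lam) : W1 P Q d ≤ ∑ i, ∑ j, lam i j * d i j := by
  obtain ⟨m, hm⟩ := Finite.bddBelow_range fun p : S × T => d p.1 p.2
  refine csInf_le ⟨∑ i, P i * m, ?_⟩ ⟨lam, hlam.nonneg, hlam.sum_right, hlam.sum_left, rfl⟩
  rintro _ ⟨μ, hnonneg, hright, hleft, rfl⟩
  have hμ : IsCoupling P Q μ := ⟨hnonneg, hright, hleft⟩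
  simpa using hμ.sum_mul_sub_sum_mul_le (U := fun _ => m) (V := 0) (d := d)
    fun i j => by simpa using hm ⟨(i, j), rfl⟩

end IsCoupling

theorem le_W1 {d : S → T → ℝ} {K : ℝ} (hP : P ∈ stdSimplex ℝ S) (hQ : Q ∈ stdSimplex ℝ T)
    (h : ∀ lam, IsCoupling P Q lam → K ≤ ∑ i, ∑ j, lam i j * d i j) : K ≤ W1 P Q d := by
  have hprod := IsCoupling.mul_of_mem_stdSimplex hP hQ
  refine le_csInf ⟨_, _, hprod.nonneg, hprod.sum_right, hprod.sum_left, rfl⟩ ?_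
  rintro _ ⟨lam, hnonneg, hright, hleft, rfl⟩
  exact h lam ⟨hnonneg, hright, hleft⟩

theorem W1_le_of_forall_le {d : S → T → ℝ} {K : ℝ} (hP : P ∈ stdSimplex ℝ S)
    (hQ : Q ∈ stdSimplex ℝ T) (h : ∀ i j, d i j ≤ K) : W1 P Q d ≤ K :=
  calc W1 P Q d ≤ ∑ i, ∑ j, P i * Q j * d i j :=
        (IsCoupling.mul_of_mem_stdSimplex hP hQ).W1_le
    _ ≤ ∑ i, ∑ j, P i * Q j * K :=
        Finset.sum_le_sum fun i _ => Finset.sum_le_sum fun j _ =>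
          mul_le_mul_of_nonneg_left (h i j) (mul_nonneg (hP.1 i) (hQ.1 j))
    _ = K := by
        simp only [← Finset.sum_mul, ← Finset.mul_sum, hP.2, hQ.2, one_mul]

theorem sum_mul_sub_sum_mul_le_W1_add {d : S → T → ℝ} {U : S → ℝ} {V : T → ℝ} {ε : ℝ}
    (hP : P ∈ stdSimplex ℝ S) (hQ : Q ∈ stdSimplex ℝ T) (h : ∀ i j, U i - V j ≤ d i j + ε) :
    ∑ i, P i * U i - ∑ j, Q j * V j ≤ W1 P Q d + ε := by
  have hshift : ∑ j, Q j * (V j + ε) = ∑ j, Q j * V j + ε := by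
    simp only [mul_add, Finset.sum_add_distrib, ← Finset.sum_mul, hQ.2, one_mul]
  have hW : ∑ i, P i * U i - ∑ j, Q j * (V j + ε) ≤ W1 P Q d :=
    le_W1 hP hQ fun lam hlam => hlam.sum_mul_sub_sum_mul_le fun i j => by linarith [h i j]
  linarith

theorem abs_sum_mul_sub_sum_mul_le_W1_add {d : S → T → ℝ} {U : S → ℝ} {V : T → ℝ} {ε : ℝ}
    (hP : P ∈ stdSimplex ℝ S) (hQ : Q ∈ stdSimplex ℝ T) (h : ∀ i j, |U i - V j| ≤ d i j + ε) :
    |∑ i, P i * U i - ∑ j, Q j * V j| ≤ W1 P Q d + ε := by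
  have hpos := sum_mul_sub_sum_mul_le_W1_add hP hQ fun i j => (le_abs_self _).trans (h i j)
  have hneg := sum_mul_sub_sum_mul_le_W1_add (U := -U) (V := -V) hP hQ fun i j => by
    simpa [neg_add_eq_sub] using (neg_le_abs _).trans (h i j)
  exact abs_le'.2 ⟨hpos, by simpa [neg_add_eq_sub] using hneg⟩

theorem abs_sum_mul_sub_sum_mul_le {U V : S → ℝ} {K : ℝ} (hP : P ∈ stdSimplex ℝ S)
    (h : ∀ i, |U i - V i| ≤ K) : |∑ i, P i * U i - ∑ i, P i * V i| ≤ K := by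
  have hmem : ∑ i, P i • (U i - V i) ∈ Metric.closedBall (0 : ℝ) K :=
    (convex_closedBall _ _).sum_mem (fun i _ => hP.1 i) hP.2 fun i _ => by simpa using h i
  simpa [mul_sub] using hmem

end Wasserstein

namespace FinMDP

variable {S A : Type*} [Fintype S] [Fintype A]

theorem P_mem_stdSimplex (M : FinMDP S A) (s : S) (a : A) : M.P s a ∈ stdSimplex ℝ S :=
  ⟨M.P_nonneg s a, M.P_sum s a⟩

/-- The one-step lookahead (Q-value) of `V`: the expected return of playing `a` in state `s` and
collecting `V` at the next state. -/
def lookahead (M : FinMDP S A) (γ : ℝ) (V : S → ℝ) (s : S) (a : A) : ℝ :=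
  M.R s a + γ * ∑ t, M.P s a t * V t

/-- `V` solves the Bellman optimality equation; for `0 ≤ γ < 1` this singles out the optimal
value function. -/
def IsOptimalValue (M : FinMDP S A) (γ : ℝ) (V : S → ℝ) : Prop :=
  ∀ s, V s = ⨆ a, M.lookahead γ V s a

/-- `V` solves the Bellman equation of the deterministic policy `π`; for `0 ≤ γ < 1` this singles
out the value function of `π`. -/
def IsPolicyValue (M : FinMDP S A) (γ : ℝ) (π : S → A) (V : S → ℝ) : Prop :=
  ∀ s, V s = M.lookahead γ V s (π s)

theorem abs_lookahead_sub_lookahead_le (M : FinMDP S A) {γ : ℝ} (hγ : 0 ≤ γ) {U V : S → ℝ} {K : ℝ}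
    (h : ∀ s, |U s - V s| ≤ K) (s : S) (a : A) :
    |M.lookahead γ U s a - M.lookahead γ V s a| ≤ γ * K := by
  rw [lookahead, lookahead, add_sub_add_left_eq_sub, ← mul_sub, abs_mul, abs_of_nonneg hγ]
  exact mul_le_mul_of_nonneg_left (abs_sum_mul_sub_sum_mul_le (M.P_mem_stdSimplex s a) h) hγ

end FinMDP

section GBSM

variable {S A T B : Type*} [Fintype S] [Fintype A] [Fintype T] [Fintype B]
  (M : FinMDP S A) (N : FinMDP T B) {γ : ℝ}

theorem abs_lookahead_sub_lookahead_le_gbsmDelta_add (hγ : 0 ≤ γ) {d : S → T → ℝ} {U : S → ℝ}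
    {V : T → ℝ} {ε : ℝ} (h : ∀ s t, |U s - V t| ≤ d s t + ε) (s : S) (a : A) (t : T) (b : B) :
    |M.lookahead γ U s a - N.lookahead γ V t b| ≤ gbsmDelta M N γ d s a t b + γ * ε := by
  have hW := abs_sum_mul_sub_sum_mul_le_W1_add (M.P_mem_stdSimplex s a) (N.P_mem_stdSimplex t b) h
  calc |M.lookahead γ U s a - N.lookahead γ V t b|
      = |(M.R s a - N.R t b) + γ * (∑ i, M.P s a i * U i - ∑ j, N.P t b j * V j)| := by
        rw [FinMDP.lookahead, FinMDP.lookahead, mul_sub, add_sub_add_comm]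
    _ ≤ |M.R s a - N.R t b| + γ * |∑ i, M.P s a i * U i - ∑ j, N.P t b j * V j| := by
        grw [abs_add_le, abs_mul, abs_of_nonneg hγ]
    _ ≤ |M.R s a - N.R t b| + γ * (W1 (M.P s a) (N.P t b) d + ε) := by grw [hW]
    _ = gbsmDelta M N γ d s a t b + γ * ε := by rw [gbsmDelta, mul_add, add_assoc]

theorem gbsmDelta_le (hγ : 0 ≤ γ) {d : S → T → ℝ} {K L : ℝ} {s : S} {a : A} {t : T} {b : B}
    (hR : |M.R s a - N.R t b| ≤ K) (hd : ∀ i j, d i j ≤ L) :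
    gbsmDelta M N γ d s a t b ≤ K + γ * L :=
  add_le_add hR (mul_le_mul_of_nonneg_left
    (W1_le_of_forall_le (M.P_mem_stdSimplex s a) (N.P_mem_stdSimplex t b) hd) hγ)

theorem gbsmF_apply (d : S → T → ℝ) (s : S) (t : T) :
    gbsmF M N γ d s t = hausdorffCost fun a b => gbsmDelta M N γ d s a t b :=
  rfl

variable [Nonempty A] [Nonempty B]

theorem iterate_gbsmF_le (hγ0 : 0 ≤ γ) (hγ1 : γ < 1) {K : ℝ}
    (hR : ∀ s a t b, |M.R s a - N.R t b| ≤ K) (n : ℕ) (s : S) (t : T) :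
    (gbsmF M N γ)^[n] (fun _ _ => 0) s t ≤ K / (1 - γ) := by
  have hγ : 0 < 1 - γ := sub_pos.2 hγ1
  induction n generalizing s t with
  | zero =>
    have hK : 0 ≤ K :=
      (abs_nonneg _).trans (hR s (Classical.arbitrary A) t (Classical.arbitrary B))
    exact div_nonneg hK hγ.le
  | succ n ih =>
    have hfix : K + γ * (K / (1 - γ)) = K / (1 - γ) := by field_simp; ring
    rw [Function.iterate_succ_apply', gbsmF_apply, ← hfix]
    exact hausdorffCost_le fun a b => gbsmDelta_le M N hγ0 (hR s a t b) ih

theorem iterate_gbsmF_le_gbsm (hγ0 : 0 ≤ γ) (hγ1 : γ < 1) (n : ℕ) (s : S) (t : T) :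
    (gbsmF M N γ)^[n] (fun _ _ => 0) s t ≤ gbsm M N γ s t := by
  obtain ⟨K, hK⟩ := Finite.bddAbove_range
    fun p : (S × A) × T × B => |M.R p.1.1 p.1.2 - N.R p.2.1 p.2.2|
  have hbdd : BddAbove (Set.range fun m => (gbsmF M N γ)^[m] (fun _ _ => 0) s t) := by
    refine ⟨K / (1 - γ), ?_⟩
    rintro _ ⟨m, rfl⟩
    exact iterate_gbsmF_le M N hγ0 hγ1 (fun s a t b => hK ⟨((s, a), t, b), rfl⟩) m s t
  exact le_ciSup hbdd n

variable {M N}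

theorem FinMDP.IsOptimalValue.abs_sub_le_gbsmF_add {U : S → ℝ} {V : T → ℝ}
    (hU : M.IsOptimalValue γ U) (hV : N.IsOptimalValue γ V) (hγ : 0 ≤ γ) {d : S → T → ℝ} {ε : ℝ}
    (h : ∀ s t, |U s - V t| ≤ d s t + ε) (s : S) (t : T) :
    |U s - V t| ≤ gbsmF M N γ d s t + γ * ε := by
  rw [hU s, hV t, gbsmF_apply]
  exact abs_ciSup_sub_ciSup_le_hausdorffCost_add fun a b =>
    abs_lookahead_sub_lookahead_le_gbsmDelta_add M N hγ h s a t b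

theorem FinMDP.IsOptimalValue.abs_sub_le_iterate_gbsmF_add {U : S → ℝ} {V : T → ℝ}
    (hU : M.IsOptimalValue γ U) (hV : N.IsOptimalValue γ V) (hγ : 0 ≤ γ) {C : ℝ}
    (hC : ∀ s t, |U s - V t| ≤ C) (n : ℕ) (s : S) (t : T) :
    |U s - V t| ≤ (gbsmF M N γ)^[n] (fun _ _ => 0) s t + γ ^ n * C := by
  induction n generalizing s t with
  | zero => simpa using hC s t
  | succ n ih =>
    rw [Function.iterate_succ_apply', pow_succ', mul_assoc]
    exact hU.abs_sub_le_gbsmF_add hV hγ ih s t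

theorem FinMDP.IsOptimalValue.abs_sub_le_gbsm {U : S → ℝ} {V : T → ℝ}
    (hU : M.IsOptimalValue γ U) (hV : N.IsOptimalValue γ V) (hγ0 : 0 ≤ γ) (hγ1 : γ < 1)
    (s : S) (t : T) : |U s - V t| ≤ gbsm M N γ s t := by
  obtain ⟨C, hC⟩ := Finite.bddAbove_range fun p : S × T => |U p.1 - V p.2|
  have hlim : Filter.Tendsto (fun n : ℕ => gbsm M N γ s t + γ ^ n * C) Filter.atTop
      (nhds (gbsm M N γ s t)) := by
    simpa using ((tendsto_pow_atTop_nhds_zero_of_lt_one hγ0 hγ1).mul_const C).const_add _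
  refine ge_of_tendsto' hlim fun n => ?_
  calc |U s - V t| ≤ (gbsmF M N γ)^[n] (fun _ _ => 0) s t + γ ^ n * C :=
        hU.abs_sub_le_iterate_gbsmF_add hV hγ0 (fun s t => hC ⟨(s, t), rfl⟩) n s t
    _ ≤ gbsm M N γ s t + γ ^ n * C := by grw [iterate_gbsmF_le_gbsm M N hγ0 hγ1 n s t]

end GBSM

section Transfer

variable {S A T B : Type*} [Fintype S] [Fintype A] [Fintype T] [Fintype B]
  {M : FinMDP S A} {N : FinMDP T B} {γ : ℝ} {Ustar Upi : S → ℝ} {Vstar Vpi : T → ℝ}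

theorem abs_policyValue_sub_policyValue_le (hγ : 0 ≤ γ) {π : S → A} {σ : T → B}
    (hUpi : M.IsPolicyValue γ π Upi) (hVpi : N.IsPolicyValue γ σ Vpi) {d : S → T → ℝ}
    (hd : ∀ s t, |Ustar s - Vstar t| ≤ d s t) {ρ X : ℝ} (hρ : ∀ s, |Ustar s - Upi s| ≤ ρ)
    (hX : ∀ t, |Vstar t - Vpi t| ≤ X) (s : S) (t : T) :
    |Upi s - Vpi t| ≤ gbsmDelta M N γ d s (π s) t (σ t) + γ * ρ + γ * X := by
  have hsource : |M.lookahead γ Upi s (π s) - M.lookahead γ Ustar s (π s)| ≤ γ * ρ :=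
    M.abs_lookahead_sub_lookahead_le hγ (fun s => abs_sub_comm (Ustar s) _ ▸ hρ s) s (π s)
  have htransfer : |M.lookahead γ Ustar s (π s) - N.lookahead γ Vstar t (σ t)| ≤
      gbsmDelta M N γ d s (π s) t (σ t) := by
    simpa using abs_lookahead_sub_lookahead_le_gbsmDelta_add (ε := 0) M N hγ (by simpa using hd)
      s (π s) t (σ t)
  have htarget : |N.lookahead γ Vstar t (σ t) - N.lookahead γ Vpi t (σ t)| ≤ γ * X :=
    N.abs_lookahead_sub_lookahead_le hγ hX t (σ t)
  rw [hUpi s, hVpi t]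
  grw [abs_sub_le _ (M.lookahead γ Ustar s (π s)) _,
    abs_sub_le (M.lookahead γ Ustar s (π s)) (N.lookahead γ Vstar t (σ t)) _, hsource, htransfer,
    htarget]
  exact le_of_eq (by ring)

theorem abs_optimalValue_sub_policyValue_le (hγ0 : 0 ≤ γ) (hγ1 : γ < 1) {π : S → A} {σ : T → B}
    (f : T → S) (hUstar : M.IsOptimalValue γ Ustar) (hVstar : N.IsOptimalValue γ Vstar)
    (hUpi : M.IsPolicyValue γ π Upi) (hVpi : N.IsPolicyValue γ σ Vpi) {D E ρ : ℝ}
    (hD : ∀ t, gbsm M N γ (f t) t ≤ D)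
    (hE : ∀ t, gbsmDelta M N γ (gbsm M N γ) (f t) (π (f t)) t (σ t) ≤ E)
    (hρ : ∀ s, |Ustar s - Upi s| ≤ ρ) (t : T) :
    |Vstar t - Vpi t| ≤ (D + E + (1 + γ) * ρ) / (1 - γ) := by
  have : Nonempty T := ⟨t⟩
  have : Nonempty A := ⟨π (f t)⟩
  have : Nonempty B := ⟨σ t⟩
  have hd := hUstar.abs_sub_le_gbsm hVstar hγ0 hγ1
  obtain ⟨t₀, hmax⟩ := Finite.exists_max fun t => |Vstar t - Vpi t|
  set X := |Vstar t₀ - Vpi t₀|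
  have hX : X ≤ D + E + (1 + γ) * ρ + γ * X :=
    calc X ≤ |Vstar t₀ - Ustar (f t₀)| + |Ustar (f t₀) - Upi (f t₀)| + |Upi (f t₀) - Vpi t₀| := by
          grw [← abs_sub_le, ← abs_sub_le]
      _ ≤ D + ρ + (E + γ * ρ + γ * X) := by
          gcongr
          · exact abs_sub_comm (Vstar t₀) _ ▸ (hd (f t₀) t₀).trans (hD t₀)
          · exact hρ (f t₀)
          · grw [abs_policyValue_sub_policyValue_le hγ0 hUpi hVpi hd hρ hmax, hE]
      _ = D + E + (1 + γ) * ρ + γ * X := by ring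
  rw [le_div_iff₀ (sub_pos.2 hγ1)]
  calc |Vstar t - Vpi t| * (1 - γ) ≤ X * (1 - γ) :=
        mul_le_mul_of_nonneg_right (hmax t) (sub_nonneg.2 hγ1.le)
    _ ≤ D + E + (1 + γ) * ρ := by linarith

theorem policy_transfer_regret_bound_general [Nonempty T] (hγ0 : 0 ≤ γ) (hγ1 : γ < 1)
    (π : S → A) (f : T → S) (g : A → B)
    (hUstar : M.IsOptimalValue γ Ustar) (hVstar : N.IsOptimalValue γ Vstar)
    (hUpi : M.IsPolicyValue γ π Upi) (hVpi : N.IsPolicyValue γ (fun t => g (π (f t))) Vpi) :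
    (⨆ t, |Vstar t - Vpi t|) ≤
      ((⨆ t, gbsm M N γ (f t) t) +
        (⨆ t, ⨆ a, gbsmDelta M N γ (gbsm M N γ) (f t) a t (g a)) +
        (1 + γ) * ⨆ s, |Ustar s - Upi s|) / (1 - γ) :=
  ciSup_le <| abs_optimalValue_sub_policyValue_le hγ0 hγ1 f hUstar hVstar hUpi hVpi
    (le_ciSup (Finite.bddAbove_range _))
    (fun t => le_ciSup_of_le (Finite.bddAbove_range _) t <|
      le_ciSup (Finite.bddAbove_range fun a => gbsmDelta M N γ (gbsm M N γ) (f t) a t (g a))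
        (π (f t)))
    (le_ciSup (Finite.bddAbove_range fun s => |Ustar s - Upi s|))

end Transfer

/-- regret bound for a policy transferred from `M₁` to `M₂` via a state
mapping `f` and an action mapping `g`. -/
theorem policy_transfer_regret_bound
    (M₁ : FinMDP S₁ A₁) (M₂ : FinMDP S₂ A₂) (γ Rbar : ℝ)
    (hγ0 : 0 ≤ γ) (hγ1 : γ < 1) (hRbar : 0 < Rbar)
    (hR₁ : ∀ s a, 0 ≤ M₁.R s a ∧ M₁.R s a ≤ Rbar)
    (hR₂ : ∀ s a, 0 ≤ M₂.R s a ∧ M₂.R s a ≤ Rbar)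
    (π : S₁ → A₁) (f : S₂ → S₁) (g : A₁ → A₂)
    (V₁star V₁pi : S₁ → ℝ) (V₂star V₂pi : S₂ → ℝ)
    (hV₁star : ∀ s, V₁star s = ⨆ a : A₁, (M₁.R s a + γ * ∑ t, M₁.P s a t * V₁star t))
    (hV₂star : ∀ s', V₂star s' = ⨆ a : A₂, (M₂.R s' a + γ * ∑ t, M₂.P s' a t * V₂star t))
    (hV₁pi : ∀ s, V₁pi s = M₁.R s (π s) + γ * ∑ t, M₁.P s (π s) t * V₁pi t)
    (hV₂pi : ∀ s', V₂pi s' =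
      M₂.R s' (g (π (f s'))) + γ * ∑ t, M₂.P s' (g (π (f s'))) t * V₂pi t) :
    (⨆ s' : S₂, |V₂star s' - V₂pi s'|) ≤
      ((⨆ s' : S₂, gbsm M₁ M₂ γ (f s') s') +
        (⨆ s' : S₂, ⨆ a : A₁, gbsmDelta M₁ M₂ γ (gbsm M₁ M₂ γ) (f s') a s' (g a)) +
        (1 + γ) * ⨆ s : S₁, |V₁star s - V₁pi s|) / (1 - γ) := by
  exact policy_transfer_regret_bound_general hγ0 hγ1 π f g hV₁star hV₂star hV₁pi hV₂pi

end
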